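/- Let Theta = [a_0, a_1, ...] in k((X^{-1})) be badly approximable with |Theta| <= 1/2. Suppose there exist a finite word V, finite words U_k, an increasing sequence of positive integers n_k, and x > 0 such that the continued fraction of Theta begins with U_k V^{[n_k]} for every k, with |V^{[n_k]}| >= x |U_k|, where V^{[n]} is n concatenated copies of V. Let Phi = [mirror(V), mirror(V), mirror(V), ...] be the quadratic power series with purely periodic expansion. Set M = limsup deg a_l and m = liminf deg a_l. If x > M/m, then inf_{q != 0} |q| * ||q Theta|| * ||q Phi|| = 0. -/

import Mathlib

open Polynomial Filter

noncomputable section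
open scoped Classical

namespace Littlewood

variable (k : Type*) [Field k]

/-- The element `X` of `k((X⁻¹))`: the inverse of the Laurent-series variable `t = X⁻¹`. -/
def XLS : LaurentSeries k := (HahnSeries.single (1 : ℤ) (1 : k))⁻¹

variable {k}

/-- Embedding of `k[X]` into `k((X⁻¹))`, sending the polynomial variable to `X`. -/
def emb (p : Polynomial k) : LaurentSeries k := Polynomial.aeval (XLS k) p

/-- The degree of a Laurent series in `X⁻¹`: if `F = ∑_{h ≥ -m} f_h X^{-h}` with
`f_{-m} ≠ 0` then `deg F = m`. -/
def deg (F : LaurentSeries k) : ℤ := -F.order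

/-- The norm `|F| = 2 ^ deg F`, with `|0| = 0`. -/
def lnorm (F : LaurentSeries k) : ℝ := if F = 0 then 0 else (2 : ℝ) ^ (deg F)

/-- Fractional part: the part of the series comprising only negative powers of `X`. -/
def frac (F : LaurentSeries k) : LaurentSeries k where
  coeff n := if 1 ≤ n then F.coeff n else 0
  isPWO_support' := F.isPWO_support'.mono (fun n hn => by
    simp only [Function.mem_support] at hn ⊢
    intro h
    exact hn (by simp [h]))

/-- `‖F‖`: the norm of the fractional part of `F`. -/
def fnorm (F : LaurentSeries k) : ℝ := lnorm (frac F)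

/-- `F` is a rational function. -/
def IsRat (F : LaurentSeries k) : Prop :=
  ∃ p q : Polynomial k, q ≠ 0 ∧ F * emb q = emb p

/-- The polynomial part of a Laurent series (the part with nonnegative powers of `X`). -/
def polyPart (F : LaurentSeries k) : Polynomial k :=
  ∑ i ∈ Finset.range ((-F.order).toNat + 1), Polynomial.C (F.coeff (-(i : ℤ))) * Polynomial.X ^ i

/-- The complete quotients of the continued fraction algorithm applied to `F`. -/
def cfRem (F : LaurentSeries k) : ℕ → LaurentSeries k
  | 0 => F
  | n + 1 => (cfRem F n - emb (polyPart (cfRem F n)))⁻¹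

/-- The partial quotients of the continued fraction expansion of `F`. -/
def pq (F : LaurentSeries k) (n : ℕ) : Polynomial k := polyPart (cfRem F n)

/-- Denominators `q_n` of the convergents of the continued fraction with
partial quotients `a`. -/
def den (a : ℕ → Polynomial k) : ℕ → Polynomial k
  | 0 => 1
  | 1 => a 1
  | n + 2 => a (n + 2) * den a (n + 1) + den a n

/-- Numerators `p_n` of the convergents. -/
def num (a : ℕ → Polynomial k) : ℕ → Polynomial k
  | 0 => a 0
  | 1 => a 1 * a 0 + 1
  | n + 2 => a (n + 2) * num a (n + 1) + num a n

/-- The value of a finite continued fraction `[b_0, b_1, …, b_m]` over `k[X]`. -/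
def finCF : List (Polynomial k) → LaurentSeries k
  | [] => 0
  | [b] => emb b
  | b :: l => emb b + (finCF l)⁻¹

/-- `F` is badly approximable. -/
def Bad (F : LaurentSeries k) : Prop :=
  ∃ c : ℝ, 0 < c ∧ ∀ q : Polynomial k, q ≠ 0 → c ≤ lnorm (emb q) * fnorm (emb q * F)

lemma lnorm_zero : lnorm (0 : LaurentSeries k) = 0 := by simp [lnorm]

lemma lnorm_of_ne_zero {F : LaurentSeries k} (hF : F ≠ 0) :
    lnorm F = (2 : ℝ) ^ (-F.order) := by simp [lnorm, hF, deg]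

lemma lnorm_pos {F : LaurentSeries k} (hF : F ≠ 0) : 0 < lnorm F := by
  rw [lnorm_of_ne_zero hF]; positivity

lemma lnorm_nonneg (F : LaurentSeries k) : 0 ≤ lnorm F := by
  by_cases hF : F = 0
  · simp [hF, lnorm_zero]
  · exact (lnorm_pos hF).le

lemma lnorm_one : lnorm (1 : LaurentSeries k) = 1 := by
  simp [lnorm_of_ne_zero]

lemma lnorm_neg (F : LaurentSeries k) : lnorm (-F) = lnorm F := by
  simp [lnorm, deg]

lemma lnorm_mul (F G : LaurentSeries k) : lnorm (F * G) = lnorm F * lnorm G := by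
  by_cases hF : F = 0
  · simp [hF, lnorm_zero]
  by_cases hG : G = 0
  · simp [hG, lnorm_zero]
  rw [lnorm_of_ne_zero hF, lnorm_of_ne_zero hG, lnorm_of_ne_zero (mul_ne_zero hF hG),
    HahnSeries.order_mul hF hG, ← zpow_add₀ two_ne_zero]
  congr 1
  ring

lemma lnorm_inv (F : LaurentSeries k) : lnorm F⁻¹ = (lnorm F)⁻¹ := by
  by_cases hF : F = 0
  · simp [hF, lnorm_zero]
  · apply eq_inv_of_mul_eq_one_left
    rw [← lnorm_mul, inv_mul_cancel₀ hF, lnorm_one]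

lemma lnorm_add_le_max (F G : LaurentSeries k) : lnorm (F + G) ≤ max (lnorm F) (lnorm G) := by
  by_cases hF : F = 0
  · simp [hF]
  by_cases hG : G = 0
  · simp [hG]
  by_cases hFG : F + G = 0
  · simp [hFG, lnorm_zero, lnorm_nonneg]
  have h := HahnSeries.min_order_le_order_add hFG
  rw [lnorm_of_ne_zero hF, lnorm_of_ne_zero hG, lnorm_of_ne_zero hFG, le_max_iff]
  rcases min_le_iff.1 h with h | h
  · exact Or.inl (zpow_le_zpow_right₀ one_le_two (by omega))
  · exact Or.inr (zpow_le_zpow_right₀ one_le_two (by omega))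

lemma lnorm_add_eq_left {F G : LaurentSeries k} (h : lnorm G < lnorm F) :
    lnorm (F + G) = lnorm F := by
  apply le_antisymm
  · simpa [h.le] using lnorm_add_le_max F G
  · have h' := lnorm_add_le_max (F + G) (-G)
    rw [add_neg_cancel_right, lnorm_neg, le_max_iff] at h'
    exact h'.resolve_right (not_le.2 h)

lemma emb_add (p q : k[X]) : emb (p + q) = emb p + emb q := map_add _ _ _

lemma emb_mul (p q : k[X]) : emb (p * q) = emb p * emb q := map_mul _ _ _

lemma emb_zero : emb (0 : k[X]) = 0 := map_zero _

lemma emb_one : emb (1 : k[X]) = 1 := map_one _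

lemma emb_monomial (i : ℕ) (c : k) :
    emb (monomial i c) = HahnSeries.single (-(i : ℤ)) c := by
  rw [emb, aeval_monomial, XLS, HahnSeries.inv_single, HahnSeries.single_pow,
    HahnSeries.algebraMap_apply', ← PowerSeries.C_eq_algebraMap, HahnSeries.ofPowerSeries_C]
  simp [HahnSeries.C_apply, HahnSeries.single_mul_single]

lemma coeff_emb (p : k[X]) (n : ℤ) :
    (emb p).coeff n = if 1 ≤ n then 0 else p.coeff (-n).toNat := by
  induction p using Polynomial.induction_on' with
  | add p q hp hq =>
    rw [emb_add, HahnSeries.coeff_add, hp, hq]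
    split_ifs <;> simp
  | monomial i c =>
    rw [emb_monomial, HahnSeries.coeff_single, coeff_monomial]
    split_ifs <;> first | rfl | omega

lemma emb_ne_zero {p : k[X]} (hp : p ≠ 0) : emb p ≠ 0 := by
  intro h
  have h1 := coeff_emb p (-(p.natDegree : ℤ))
  rw [h, if_neg (by omega)] at h1
  simp at h1
  exact hp (leadingCoeff_eq_zero.1 h1.symm)

lemma lnorm_emb {p : k[X]} (hp : p ≠ 0) : lnorm (emb p) = 2 ^ p.natDegree := by
  have h : (emb p).order = -(p.natDegree : ℤ) := by
    apply le_antisymm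
    · apply HahnSeries.order_le_of_coeff_ne_zero
      rw [coeff_emb, if_neg (by omega)]
      simpa using hp
    · rw [HahnSeries.le_order_iff_forall (emb_ne_zero hp)]
      intro j hj
      rw [coeff_emb, if_neg (by omega)]
      exact coeff_eq_zero_of_natDegree_lt (by omega)
  rw [lnorm_of_ne_zero (emb_ne_zero hp), h, neg_neg, zpow_natCast]

lemma lnorm_le_half {F : LaurentSeries k} (h : ∀ n : ℤ, n < 1 → F.coeff n = 0) :
    lnorm F ≤ 1 / 2 := by
  by_cases hF : F = 0
  · simp [hF, lnorm_zero]
  rw [lnorm_of_ne_zero hF]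
  have h1 : 1 ≤ F.order := (HahnSeries.le_order_iff_forall hF).2 fun j hj => h j hj
  calc (2 : ℝ) ^ (-F.order) ≤ 2 ^ (-1 : ℤ) := zpow_le_zpow_right₀ one_le_two (by omega)
    _ = 1 / 2 := by norm_num

lemma coeff_frac (F : LaurentSeries k) (n : ℤ) :
    (frac F).coeff n = if 1 ≤ n then F.coeff n else 0 := rfl

lemma lnorm_frac_le_half (F : LaurentSeries k) : lnorm (frac F) ≤ 1 / 2 :=
  lnorm_le_half fun n hn => by rw [coeff_frac, if_neg (by omega)]

lemma coeff_polyPart (F : LaurentSeries k) (i : ℕ) :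
    (polyPart F).coeff i = F.coeff (-(i : ℤ)) := by
  simp only [polyPart, finsetSum_coeff, coeff_C_mul_X_pow, Finset.sum_ite_eq, Finset.mem_range]
  split_ifs with h
  · rfl
  · exact (HahnSeries.coeff_eq_zero_of_lt_order (by omega)).symm

lemma sub_emb_polyPart (F : LaurentSeries k) : F - emb (polyPart F) = frac F := by
  ext n
  rw [HahnSeries.coeff_sub, coeff_emb, coeff_frac, coeff_polyPart]
  split_ifs with h
  · simp
  · rw [Int.toNat_of_nonneg (by omega), neg_neg, sub_self]

lemma emb_polyPart_add_frac (F : LaurentSeries k) : emb (polyPart F) + frac F = F := by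
  rw [← sub_emb_polyPart]; ring

lemma frac_sub_emb (F : LaurentSeries k) (p : k[X]) : frac (F - emb p) = frac F := by
  ext n
  rw [coeff_frac, coeff_frac, HahnSeries.coeff_sub, coeff_emb]
  split_ifs <;> simp

lemma lnorm_frac_le (F : LaurentSeries k) : lnorm (frac F) ≤ lnorm F := by
  by_cases h : 1 ≤ lnorm F
  · linarith [lnorm_frac_le_half F]
  · have hF : polyPart F = 0 := by
      ext i
      rw [coeff_polyPart, coeff_zero]
      by_cases hF0 : F = 0
      · simp [hF0]
      apply HahnSeries.coeff_eq_zero_of_lt_order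
      rw [lnorm_of_ne_zero hF0] at h
      by_contra! h'
      exact h (one_le_zpow₀ one_le_two (by omega))
    rw [← sub_emb_polyPart, hF, emb_zero, sub_zero]

lemma fnorm_le (F : LaurentSeries k) (p : k[X]) : fnorm F ≤ lnorm (F - emb p) := by
  rw [fnorm, ← frac_sub_emb F p]
  exact lnorm_frac_le _

lemma lnorm_emb_polyPart {F : LaurentSeries k} (h : 1 ≤ lnorm F) :
    lnorm (emb (polyPart F)) = lnorm F := by
  have h1 : emb (polyPart F) = F + -frac F := by rw [← sub_emb_polyPart]; ring
  rw [h1]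
  apply lnorm_add_eq_left
  rw [lnorm_neg]
  linarith [lnorm_frac_le_half F]

lemma cfRem_succ (F : LaurentSeries k) (n : ℕ) : cfRem F (n + 1) = (frac (cfRem F n))⁻¹ := by
  rw [cfRem, sub_emb_polyPart]

lemma emb_pq_add_frac (F : LaurentSeries k) (n : ℕ) :
    emb (pq F n) + frac (cfRem F n) = cfRem F n := emb_polyPart_add_frac _

lemma two_le_lnorm_cfRem {F : LaurentSeries k} {n : ℕ} (h : frac (cfRem F n) ≠ 0) :
    2 ≤ lnorm (cfRem F (n + 1)) := by
  rw [cfRem_succ, lnorm_inv, le_inv_comm₀ two_pos (lnorm_pos h)]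
  simpa using lnorm_frac_le_half (cfRem F n)

lemma lnorm_emb_pq {F : LaurentSeries k} {n : ℕ} (h : frac (cfRem F n) ≠ 0) :
    lnorm (emb (pq F (n + 1))) = lnorm (cfRem F (n + 1)) :=
  lnorm_emb_polyPart (by linarith [two_le_lnorm_cfRem h])

lemma frac_ne_zero_of_pq_ne_zero {F : LaurentSeries k} {n : ℕ} (h : pq F (n + 1) ≠ 0) :
    frac (cfRem F n) ≠ 0 := by
  intro h0
  apply h
  rw [pq, cfRem_succ, h0, inv_zero]
  ext i
  simp [coeff_polyPart]

/-- Continuants of `a 1, a 2, …`, shifted so that `cont a (n + 1)` is the denominator of the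
`n`-th convergent. -/
def cont (a : ℕ → k[X]) : ℕ → k[X]
  | 0 => 0
  | 1 => 1
  | n + 2 => a (n + 1) * cont a (n + 1) + cont a n

/-- Numerators, shifted in the same way as `cont`. -/
def contNum (a : ℕ → k[X]) : ℕ → k[X]
  | 0 => 1
  | 1 => a 0
  | n + 2 => a (n + 1) * contNum a (n + 1) + contNum a n

lemma lnorm_cont_lt {a : ℕ → k[X]} {n : ℕ} (h : ∀ i < n, 2 ≤ lnorm (emb (a (i + 1)))) :
    lnorm (emb (cont a n)) < lnorm (emb (cont a (n + 1))) ∧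
      ∀ i < n, lnorm (emb (cont a (i + 2))) =
        lnorm (emb (a (i + 1))) * lnorm (emb (cont a (i + 1))) := by
  induction n with
  | zero => simp [cont, emb_zero, emb_one, lnorm_zero, lnorm_one]
  | succ n ih =>
    obtain ⟨ih1, ih2⟩ := ih fun i hi => h i (by omega)
    have h0 := lnorm_nonneg (emb (cont a n))
    have h2 := h n (by omega)
    have h3 : lnorm (emb (cont a (n + 2))) =
        lnorm (emb (a (n + 1))) * lnorm (emb (cont a (n + 1))) := by
      rw [cont, emb_add, emb_mul, lnorm_add_eq_left, lnorm_mul]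
      rw [lnorm_mul]
      nlinarith
    refine ⟨by rw [h3]; nlinarith, fun i hi => ?_⟩
    rcases Nat.lt_succ_iff_lt_or_eq.1 hi with hi | rfl
    · exact ih2 i hi
    · exact h3

/-- The errors of the convergents. -/
def cfErr (F : LaurentSeries k) (n : ℕ) : LaurentSeries k :=
  emb (cont (pq F) n) * F - emb (contNum (pq F) n)

lemma cfErr_succ {F : LaurentSeries k} {n : ℕ} (h : ∀ i < n, frac (cfRem F i) ≠ 0) :
    cfErr F (n + 1) = -cfErr F n * frac (cfRem F n) := by
  induction n with
  | zero =>
    have := emb_pq_add_frac F 0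
    simp only [cfRem] at this ⊢
    simp only [cfErr, cont, contNum, emb_one, emb_zero]
    linear_combination -this
  | succ n ih =>
    have ih := ih fun i hi => h i (by omega)
    have hn := h n (by omega)
    have h1 : cfErr F (n + 2) = emb (pq F (n + 1)) * cfErr F (n + 1) + cfErr F n := by
      simp only [cfErr, cont, contNum, emb_add, emb_mul]
      ring
    have h2 := emb_pq_add_frac F (n + 1)
    have h3 : cfErr F n = -cfErr F (n + 1) * cfRem F (n + 1) := by
      rw [ih, cfRem_succ]
      field_simp
    rw [h1, h3]
    linear_combination cfErr F (n + 1) * h2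

lemma frac_cfRem_ne_zero {F : LaurentSeries k} (hF : ¬ IsRat F) (n : ℕ) :
    frac (cfRem F n) ≠ 0 := by
  induction n using Nat.strong_induction_on with
  | _ n ih =>
    intro h0
    have h1 := cfErr_succ ih
    rw [h0, mul_zero, cfErr, sub_eq_zero] at h1
    refine hF ⟨_, cont (pq F) (n + 1), ?_, by rw [mul_comm]; exact h1⟩
    have h2 := (lnorm_cont_lt (a := pq F) (n := n) fun i hi => by
      rw [lnorm_emb_pq (ih i hi)]; exact two_le_lnorm_cfRem (ih i hi)).1
    intro h3
    rw [h3, emb_zero, lnorm_zero] at h2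
    exact absurd h2 (not_lt.2 (lnorm_nonneg _))

lemma two_le_lnorm_pq {F : LaurentSeries k} (hF : ∀ n, frac (cfRem F n) ≠ 0) (n : ℕ) :
    2 ≤ lnorm (emb (pq F (n + 1))) := by
  rw [lnorm_emb_pq (hF n)]
  exact two_le_lnorm_cfRem (hF n)

lemma lnorm_cont_succ {F : LaurentSeries k} (hF : ∀ n, frac (cfRem F n) ≠ 0) (n : ℕ) :
    lnorm (emb (cont (pq F) (n + 2))) =
      lnorm (emb (pq F (n + 1))) * lnorm (emb (cont (pq F) (n + 1))) :=
  (lnorm_cont_lt (n := n + 1) fun i _ => two_le_lnorm_pq hF i).2 n (by omega)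

lemma lnorm_cfErr_mul {F : LaurentSeries k} (hF : ∀ n, frac (cfRem F n) ≠ 0) (n : ℕ) :
    lnorm (cfErr F n) * lnorm (emb (cont (pq F) (n + 1))) = 1 := by
  induction n with
  | zero =>
    simp [cfErr, cont, contNum, emb_zero, emb_one, lnorm_neg, lnorm_one]
  | succ n ih =>
    have h : lnorm (frac (cfRem F n)) ≠ 0 := (lnorm_pos (hF n)).ne'
    rw [cfErr_succ fun i _ => hF i, lnorm_cont_succ hF, lnorm_emb_pq (hF n), cfRem_succ, lnorm_inv,
      lnorm_mul, lnorm_neg, ← ih]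
    field_simp

lemma fnorm_cont_mul_le {F : LaurentSeries k} (hF : ∀ n, frac (cfRem F n) ≠ 0) (n : ℕ) :
    lnorm (emb (cont (pq F) (n + 1))) *
      fnorm (emb (cont (pq F) (n + 1)) * F) ≤ (lnorm (emb (pq F (n + 1))))⁻¹ := by
  have h1 := lnorm_cfErr_mul hF (n + 1)
  rw [lnorm_cont_succ hF] at h1
  calc lnorm (emb (cont (pq F) (n + 1))) * fnorm (emb (cont (pq F) (n + 1)) * F)
      ≤ lnorm (emb (cont (pq F) (n + 1))) * lnorm (cfErr F (n + 1)) :=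
        mul_le_mul_of_nonneg_left (fnorm_le _ _) (lnorm_nonneg _)
    _ = (lnorm (emb (pq F (n + 1))))⁻¹ :=
        eq_inv_of_mul_eq_one_left (by linear_combination h1)

lemma pq_ne_zero {F : LaurentSeries k} (hF : ∀ n, frac (cfRem F n) ≠ 0) (n : ℕ) :
    pq F (n + 1) ≠ 0 := by
  intro h
  have h1 := two_le_lnorm_pq hF n
  rw [h, emb_zero, lnorm_zero] at h1
  linarith

lemma one_le_natDegree_pq {F : LaurentSeries k} (hF : ∀ n, frac (cfRem F n) ≠ 0) (n : ℕ) :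
    1 ≤ (pq F (n + 1)).natDegree := by
  have h1 := two_le_lnorm_pq hF n
  rw [lnorm_emb (pq_ne_zero hF n)] at h1
  by_contra! h
  rw [Nat.lt_one_iff.1 h, pow_zero] at h1
  linarith

lemma lnorm_emb_cont {F : LaurentSeries k} (hF : ∀ n, frac (cfRem F n) ≠ 0) (n : ℕ) :
    lnorm (emb (cont (pq F) (n + 1))) =
      2 ^ ∑ i ∈ Finset.range n, (pq F (i + 1)).natDegree := by
  induction n with
  | zero => simp [cont, emb_one, lnorm_one]
  | succ n ih =>
    rw [lnorm_cont_succ hF, ih, lnorm_emb (pq_ne_zero hF n), Finset.sum_range_succ, pow_add,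
      mul_comm]

lemma cont_ne_zero {F : LaurentSeries k} (hF : ∀ n, frac (cfRem F n) ≠ 0) (n : ℕ) :
    cont (pq F) (n + 1) ≠ 0 := by
  intro h
  have h1 := lnorm_emb_cont hF n
  rw [h, emb_zero, lnorm_zero] at h1
  exact absurd h1 (by positivity)

lemma natDegree_pq_le_of_bad {F : LaurentSeries k} (hF : ∀ n, frac (cfRem F n) ≠ 0)
    (hbad : Bad F) : ∃ B : ℝ, ∀ n, ((pq F n).natDegree : ℝ) ≤ B := by
  obtain ⟨c, hc, h⟩ := hbad
  refine ⟨max (pq F 0).natDegree c⁻¹, fun n => ?_⟩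
  rcases n with _ | n
  · exact le_max_left _ _
  · apply le_max_of_le_right
    have h1 := (h _ (cont_ne_zero hF n)).trans (fnorm_cont_mul_le hF n)
    rw [lnorm_emb (pq_ne_zero hF n), le_inv_comm₀ hc (by positivity)] at h1
    have h2 : ((pq F (n + 1)).natDegree : ℝ) < 2 ^ (pq F (n + 1)).natDegree := by
      exact_mod_cast Nat.lt_two_pow_self
    linarith

/-- The error of approximating the `j`-th tail of `G` by the ratio of two consecutive
continuants of `a`. -/
def mirrorErr (a : ℕ → k[X]) (G : LaurentSeries k) (j n : ℕ) : LaurentSeries k :=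
  emb (cont a (n + 1)) * frac (cfRem G j) - emb (cont a n)

lemma mirrorErr_mul_cfRem {a : ℕ → k[X]} {G : LaurentSeries k}
    (hG : ∀ n, frac (cfRem G n) ≠ 0) {j n : ℕ} (h : pq G (j + 1) = a (n + 1)) :
    mirrorErr a G j (n + 1) * cfRem G (j + 1) = -mirrorErr a G (j + 1) n := by
  have h1 := emb_pq_add_frac G (j + 1)
  rw [h] at h1
  have h2 : frac (cfRem G j) * cfRem G (j + 1) = 1 := by
    rw [cfRem_succ, mul_inv_cancel₀ (hG j)]
  simp only [mirrorErr, cont, emb_add, emb_mul]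
  linear_combination (emb (a (n + 1)) * emb (cont a (n + 1)) + emb (cont a n)) * h2 +
    emb (cont a (n + 1)) * h1

lemma lnorm_mirrorErr_mul {F G : LaurentSeries k} (hF : ∀ n, frac (cfRem F n) ≠ 0)
    (hG : ∀ n, frac (cfRem G n) ≠ 0) (R N j : ℕ)
    (h : ∀ i < N, pq G (j + i + 1) = pq F (R + N - i)) :
    lnorm (mirrorErr (pq F) G j (R + N)) * lnorm (emb (cont (pq F) (R + N + 1))) =
      lnorm (mirrorErr (pq F) G (j + N) R) * lnorm (emb (cont (pq F) (R + 1))) := by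
  induction N generalizing j with
  | zero => rfl
  | succ N ih =>
    have h0 : pq G (j + 1) = pq F (R + N + 1) := h 0 (by omega)
    have h1 := congrArg lnorm (mirrorErr_mul_cfRem hG h0)
    rw [lnorm_mul, lnorm_neg, ← lnorm_emb_pq (hG j), h0] at h1
    have h2 := ih (j + 1) fun i hi => by
      have := h (i + 1) (by omega)
      rwa [show j + (i + 1) + 1 = j + 1 + i + 1 by ring,
        show R + (N + 1) - (i + 1) = R + N - i by omega] at this
    rw [show j + (N + 1) = j + 1 + N by ring, ← h2, ← h1, ← add_assoc R N 1,
      lnorm_cont_succ hF]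
    ring

lemma lnorm_cont_mul_fnorm_le_of_mirror {F G : LaurentSeries k}
    (hF : ∀ n, frac (cfRem F n) ≠ 0) (hG : ∀ n, frac (cfRem G n) ≠ 0) (hG0 : pq G 0 = 0)
    (R N : ℕ) (h : ∀ i < N, pq G (i + 1) = pq F (R + N - i)) :
    lnorm (emb (cont (pq F) (R + N + 1))) * fnorm (emb (cont (pq F) (R + N + 1)) * G) ≤
      lnorm (emb (cont (pq F) (R + 1))) ^ 2 := by
  have h1 := lnorm_mirrorErr_mul hF hG R N 0 (by simpa using h)
  have h2 : frac (cfRem G 0) = G := by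
    have := emb_pq_add_frac G 0
    rwa [hG0, emb_zero, zero_add] at this
  have h3 : fnorm (emb (cont (pq F) (R + N + 1)) * G) ≤
      lnorm (mirrorErr (pq F) G 0 (R + N)) := by
    rw [mirrorErr, h2]
    exact fnorm_le _ _
  have h4 : lnorm (mirrorErr (pq F) G (0 + N) R) ≤ lnorm (emb (cont (pq F) (R + 1))) := by
    rw [mirrorErr, sub_eq_add_neg]
    refine (lnorm_add_le_max _ _).trans (max_le ?_ ?_)
    · rw [lnorm_mul]
      nlinarith [lnorm_frac_le_half (cfRem G (0 + N)), lnorm_nonneg (emb (cont (pq F) (R + 1)))]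
    · rw [lnorm_neg]
      exact (lnorm_cont_lt fun i _ => two_le_lnorm_pq hF i).1.le
  calc _ ≤ lnorm (emb (cont (pq F) (R + N + 1))) * lnorm (mirrorErr (pq F) G 0 (R + N)) :=
        mul_le_mul_of_nonneg_left h3 (lnorm_nonneg _)
    _ = lnorm (mirrorErr (pq F) G (0 + N) R) * lnorm (emb (cont (pq F) (R + 1))) := by
        rw [← h1, mul_comm]
    _ ≤ _ := by
        rw [sq]
        exact mul_le_mul_of_nonneg_right h4 (lnorm_nonneg _)

lemma exists_neg_le_sum_range {f : ℕ → ℝ} (h : ∀ᶠ i in atTop, 0 ≤ f i) :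
    ∃ C : ℝ, ∀ R N : ℕ, -C ≤ ∑ i ∈ Finset.range N, f (R + i) := by
  obtain ⟨L, hL⟩ := eventually_atTop.1 h
  refine ⟨∑ i ∈ Finset.range L, |f i|, fun R N => ?_⟩
  set g : ℕ → ℝ := fun i => if i < L then |f i| else 0 with hg
  have h1 : ∀ i, -g i ≤ f i := fun i => by
    by_cases hi : i < L
    · simpa [hg, hi] using neg_abs_le (f i)
    · simpa [hg, hi] using hL i (not_lt.1 hi)
  have h2 : ∑ i ∈ Finset.range N, g (R + i) ≤ ∑ i ∈ Finset.range L, |f i| := by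
    have := Finset.sum_Ico_eq_sum_range g R (R + N)
    rw [Nat.add_sub_cancel_left] at this
    rw [← this, hg, ← Finset.sum_filter]
    refine Finset.sum_le_sum_of_subset_of_nonneg (fun i hi => ?_) fun i _ _ => abs_nonneg _
    exact Finset.mem_range.2 (Finset.mem_filter.1 hi).2
  have h3 : ∑ i ∈ Finset.range N, -g (R + i) ≤ ∑ i ∈ Finset.range N, f (R + i) :=
    Finset.sum_le_sum fun i _ => h1 _
  rw [Finset.sum_neg_distrib] at h3
  linarith

lemma exists_linear_growth {d : ℕ → ℝ} {B x : ℝ} (hd1 : ∀ l, 1 ≤ d (l + 1))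
    (hB : ∀ l, d l ≤ B) (hx : 0 < x) (h : limsup d atTop / liminf d atTop < x) :
    ∃ κ C : ℝ, 0 < κ ∧ ∀ R N : ℕ, x * R ≤ N →
      κ * N - C ≤
        ∑ i ∈ Finset.range N, d (R + i + 1) - ∑ i ∈ Finset.range R, d (i + 1) := by
  have hev : ∀ᶠ l in atTop, 1 ≤ d l :=
    eventually_atTop.2 ⟨1, fun l hl => by simpa [Nat.sub_add_cancel hl] using hd1 (l - 1)⟩
  have hbl : IsBoundedUnder (· ≥ ·) atTop d := isBoundedUnder_of_eventually_ge hev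
  have hbu : IsBoundedUnder (· ≤ ·) atTop d := isBoundedUnder_of ⟨B, hB⟩
  have hm : 1 ≤ liminf d atTop := le_liminf_of_le hbu.isCoboundedUnder_ge hev
  have hM : liminf d atTop ≤ limsup d atTop := liminf_le_limsup hbu hbl
  set M := limsup d atTop with hMdef
  set m := liminf d atTop with hmdef
  rw [div_lt_iff₀ (by linarith)] at h
  obtain ⟨δ, hδ, hδ'⟩ : ∃ δ : ℝ, 0 < δ ∧ M + δ < x * (m - δ) := by
    refine ⟨(x * m - M) / (2 * (1 + x)), div_pos (by linarith) (by linarith), ?_⟩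
    have h1 : (x * m - M) / (2 * (1 + x)) * (1 + x) = (x * m - M) / 2 := by field_simp
    linarith
  have h1 : ∀ᶠ l in atTop, d l < M + δ := eventually_lt_of_limsup_lt (by linarith) hbu
  have h2 : ∀ᶠ l in atTop, m - δ < d l := eventually_lt_of_lt_liminf (by linarith) hbl
  obtain ⟨C₁, hC₁⟩ := exists_neg_le_sum_range (f := fun i => M + δ - d (i + 1))
    (((tendsto_add_atTop_nat 1).eventually h1).mono fun l hl => by linarith)
  obtain ⟨C₂, hC₂⟩ := exists_neg_le_sum_range (f := fun i => d (i + 1) - (m - δ))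
    (((tendsto_add_atTop_nat 1).eventually h2).mono fun l hl => by linarith)
  refine ⟨(m - δ) - (M + δ) / x, C₁ + C₂, ?_, fun R N hRN => ?_⟩
  · rw [sub_pos, div_lt_iff₀ hx]
    linarith
  · have h3 := hC₁ 0 R
    have h4 := hC₂ R N
    simp only [zero_add, Finset.sum_sub_distrib, Finset.sum_const, Finset.card_range,
      nsmul_eq_mul] at h3 h4
    have h5 : (M + δ) * R ≤ (M + δ) / x * N := by
      rw [div_mul_eq_mul_div, le_div_iff₀ hx]
      nlinarith
    linarith

theorem theorem4 {k : Type*} [Field k] (Θ Φ : LaurentSeries k)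
    (hΘ : ¬ IsRat Θ) (hbad : Bad Θ) (hnorm : lnorm Θ ≤ 1 / 2) (h0 : pq Θ 0 = 0)
    (v : ℕ) (hv : 1 ≤ v) (V : ℕ → Polynomial k)
    (hVdeg : ∀ i : ℕ, i < v → 1 ≤ (V i).natDegree)
    (x : ℝ) (hx : 0 < x) (r nseq : ℕ → ℕ) (hnseq : StrictMono nseq) (hn1 : 1 ≤ nseq 0)
    (hprefix : ∀ K : ℕ, ∀ i : ℕ, i < v * nseq K → pq Θ (r K + 1 + i) = V (i % v))
    (hxs : ∀ K : ℕ, x * (r K : ℝ) ≤ ((v * nseq K : ℕ) : ℝ))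
    (hΦ0 : pq Φ 0 = 0)
    (hΦ : ∀ i : ℕ, pq Φ (i + 1) = V (v - 1 - i % v))
    (M m : ℝ)
    (hM : M = limsup (fun l : ℕ => ((pq Θ l).natDegree : ℝ)) atTop)
    (hm : m = liminf (fun l : ℕ => ((pq Θ l).natDegree : ℝ)) atTop)
    (hxMm : M / m < x) :
    ∀ ε : ℝ, 0 < ε → ∃ q : Polynomial k, q ≠ 0 ∧
      lnorm (emb q) * fnorm (emb q * Θ) * fnorm (emb q * Φ) < ε := by
  subst hM hm
  have hΘf := frac_cfRem_ne_zero hΘ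
  have hΦf : ∀ n, frac (cfRem Φ n) ≠ 0 := fun n => by
    apply frac_ne_zero_of_pq_ne_zero
    rw [hΦ]
    have := hVdeg (v - 1 - n % v) (by omega)
    exact ne_zero_of_natDegree_gt (n := 0) (by omega)
  obtain ⟨B, hB⟩ := natDegree_pq_le_of_bad hΘf hbad
  obtain ⟨κ, C, hκ, hC⟩ := exists_linear_growth
    (fun l => by exact_mod_cast one_le_natDegree_pq hΘf l) hB hx hxMm
  intro ε hε
  obtain ⟨t, ht⟩ := exists_pow_lt_of_lt_one hε (one_half_lt_one (α := ℝ))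
  obtain ⟨K, hK⟩ := exists_nat_ge ((t + C) / κ)
  set R := r K
  set N := v * nseq K with hN
  have hKN : K ≤ N := (hnseq.le_apply).trans (Nat.le_mul_of_pos_left _ hv)
  have hgrowth := hC R N (hxs K)
  refine ⟨cont (pq Θ) (R + N + 1), cont_ne_zero hΘf _, ?_⟩
  have h1 := fnorm_cont_mul_le hΘf (R + N)
  have h2 := lnorm_cont_mul_fnorm_le_of_mirror hΘf hΦf hΦ0 R N fun i hi => by
    have h := hprefix K (N - 1 - i) (by omega)
    rw [show R + N - i = R + 1 + (N - 1 - i) by omega, h, hΦ]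
    congr 1
    have e1 := Nat.div_add_mod i v
    have e2 := Nat.mod_lt i hv
    have e3 : i / v < nseq K := Nat.div_lt_of_lt_mul hi
    obtain ⟨s, hs⟩ := Nat.exists_eq_add_of_lt e3
    have e4 : N - 1 - i = (v - 1 - i % v) + v * s := by
      have : N = v * (i / v) + v * s + v := by rw [hN, hs]; ring
      omega
    rw [e4, Nat.add_mul_mod_self_left, Nat.mod_eq_of_lt (a := v - 1 - i % v) (by omega)]
  have h3 : (lnorm (emb (pq Θ (R + N + 1))))⁻¹ ≤ 1 :=
    inv_le_one_of_one_le₀ (by linarith [two_le_lnorm_pq hΘf (R + N)])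
  rw [lnorm_emb_cont hΘf, lnorm_emb_cont hΘf] at h2
  rw [lnorm_emb_cont hΘf] at h1 ⊢
  rw [Finset.sum_range_add] at h1 h2 ⊢
  set S := ∑ i ∈ Finset.range R, (pq Θ (i + 1)).natDegree
  set T := ∑ i ∈ Finset.range N, (pq Θ (R + i + 1)).natDegree
  have hST : S + t ≤ T := by
    rw [div_le_iff₀ hκ] at hK
    have h4 : κ * K ≤ κ * N := by gcongr
    have h5 : (S : ℝ) + t ≤ T := by
      simp only [S, T]
      push_cast
      linarith
    exact_mod_cast h5
  set A := fnorm (emb (cont (pq Θ) (R + N + 1)) * Θ)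
  have hB0 : 0 ≤ fnorm (emb (cont (pq Θ) (R + N + 1)) * Φ) := lnorm_nonneg _
  set b := fnorm (emb (cont (pq Θ) (R + N + 1)) * Φ)
  have h6 : b ≤ (1 / 2) ^ t := by
    have h7 : (2 : ℝ) ^ (S + S + t) ≤ 2 ^ (S + T) :=
      pow_le_pow_right₀ one_le_two (by omega)
    have h8 : (2 : ℝ) ^ (S + S + t) * b ≤ (2 ^ S) ^ 2 :=
      (mul_le_mul_of_nonneg_right h7 hB0).trans h2
    have h9 : (2 : ℝ) ^ t * b ≤ 1 := by
      rw [pow_add, pow_add, ← sq, mul_assoc] at h8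
      exact le_of_mul_le_mul_left (by simpa using h8) (by positivity : (0 : ℝ) < (2 ^ S) ^ 2)
    rw [one_div, inv_pow, ← one_div, le_div_iff₀ (by positivity)]
    linarith
  calc _ ≤ 1 * b := mul_le_mul_of_nonneg_right (h1.trans h3) hB0
    _ < ε := by linarith

end Littlewood
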